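/- arXiv:2103.16126 — 4 statements merged into one kernel-verified Lean document; each statement's English description precedes it below -/
import Mathlib

section
/- Let (W, S) be the Coxeter system of type A₂ × A₁ over B = {1, 2, 3}, i.e. with Coxeter matrix M 1 2 = 3, M 1 3 = 2, M 2 3 = 2 (so W ≅ S₃ × ℤ/2ℤ has order 12). Then there exists a bijection θ : ℤ/12ℤ → W such that θ(t+1)·θ(t)⁻¹ ∈ {s₁, s₂, s₃} for all t, and which is moreover 1-convenient and special: θ(2t+1) = s₁ · θ(2t) for every t ∈ ℤ, and each of s₁, s₂, s₃ equals θ(t+1)·θ(t)⁻¹ for some t. -/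
/-!
The Cayley graph of a Coxeter group of type `I₂(m) × A₁` is a prism over the `2m`-cycle
`1, s₀, s₁s₀, s₀s₁s₀, …` of the dihedral parabolic subgroup `D = ⟨s₀, s₁⟩`. The circuit runs through
all of `D` along this cycle, stopping at `s₁` just before it closes, crosses over with `s₂`, runs
through the coset `D s₂` with the same letters and returns to `1` with a second `s₂`. It is thus
spelled by `(s₀ s₁ ⋯ s₀ s₂)²`, with `s₀` at every even time. As `W = D ∪ D s₂`, the circuit meets
every element; as `W` maps onto a group of order `4m`, it meets none twice.
-/

open CoxeterSystem Function

section LeftWalk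

/-- The walk in the Cayley graph of `G` that starts at `1` and multiplies on the left by `g k` in
its `k`-th step. -/
def leftWalk {G : Type*} [Monoid G] (g : ℕ → G) : ℕ → G
  | 0 => 1
  | k + 1 => g k * leftWalk g k

variable {G : Type*} [Monoid G] {g : ℕ → G} {n : ℕ}

theorem leftWalk_add_period (hg : Periodic g n) (k : ℕ) :
    leftWalk g (k + n) = leftWalk g k * leftWalk g n := by
  induction k with
  | zero => simp [leftWalk]
  | succ k ih => rw [Nat.succ_add, leftWalk, leftWalk, ih, hg, mul_assoc]

theorem leftWalk_periodic (hg : Periodic g n) (hn : leftWalk g n * leftWalk g n = 1) :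
    Periodic (leftWalk g) (n + n) := fun k ↦ by
  rw [← add_assoc, leftWalk_add_period hg, leftWalk_add_period hg, mul_assoc, hn, mul_one]

end LeftWalk

section AlternatingWord

variable {B W : Type*} [Group W] {M : CoxeterMatrix B} (cs : CoxeterSystem M W)

theorem wordProd_alternatingWord_swap {i j : B} {k : ℕ} (hk : k ≤ 2 * M i j) :
    cs.wordProd (alternatingWord i j k) = cs.wordProd (alternatingWord j i (2 * M i j - k)) := by
  rw [cs.prod_alternatingWord_eq_prod_alternatingWord_sub i j k (by lia), mul_comm]

theorem exists_wordProd_alternatingWord_mul_simple_left {i j : B} {k : ℕ} (hM : M i j ≠ 0)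
    (hk : k ≤ 2 * M i j) :
    ∃ l ≤ 2 * M i j,
      cs.wordProd (alternatingWord i j k) * cs.simple i = cs.wordProd (alternatingWord i j l) := by
  wlog hlt : k < 2 * M i j generalizing k
  · obtain rfl : k = 2 * M i j := by lia
    simpa [wordProd_alternatingWord_swap cs le_rfl, alternatingWord] using
      this (Nat.zero_le _) (by lia)
  refine ⟨2 * M i j - (k + 1), by lia, ?_⟩
  rw [← wordProd_concat, ← alternatingWord_succ, M.symmetric i j,
    wordProd_alternatingWord_swap cs (by rw [M.symmetric j i]; lia)]

theorem exists_wordProd_alternatingWord_mul_simple_right {i j : B} {k : ℕ} (hM : M i j ≠ 0)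
    (hk : k ≤ 2 * M i j) :
    ∃ l ≤ 2 * M i j,
      cs.wordProd (alternatingWord i j k) * cs.simple j = cs.wordProd (alternatingWord i j l) := by
  rw [wordProd_alternatingWord_swap cs hk]
  have hsymm : M i j = M j i := M.symmetric i j
  obtain ⟨l, hl, h⟩ := exists_wordProd_alternatingWord_mul_simple_left cs (hsymm ▸ hM)
    (show 2 * M i j - k ≤ 2 * M j i by lia)
  exact ⟨2 * M j i - l, by lia, h.trans (wordProd_alternatingWord_swap cs hl)⟩

theorem exists_wordProd_alternatingWord_of_mem_closure {i j : B} (hM : M i j ≠ 0) {w : W}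
    (hw : w ∈ Subgroup.closure {cs.simple i, cs.simple j}) :
    ∃ k < 2 * M i j, w = cs.wordProd (alternatingWord i j k) := by
  suffices ∃ k ≤ 2 * M i j, w = cs.wordProd (alternatingWord i j k) by
    obtain ⟨k, hk, rfl⟩ := this
    obtain hlt | rfl := hk.lt_or_eq
    · exact ⟨k, hlt, rfl⟩
    · exact ⟨0, by lia, by simp [wordProd_alternatingWord_swap cs le_rfl, alternatingWord]⟩
  have exists_mul_eq {x y : W} (hy : y ∈ ({cs.simple i, cs.simple j} : Set W))
      (hx : ∃ k ≤ 2 * M i j, x = cs.wordProd (alternatingWord i j k)) :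
      ∃ k ≤ 2 * M i j, x * y = cs.wordProd (alternatingWord i j k) := by
    obtain ⟨k, hk, rfl⟩ := hx
    obtain rfl | rfl := hy
    · exact exists_wordProd_alternatingWord_mul_simple_left cs hM hk
    · exact exists_wordProd_alternatingWord_mul_simple_right cs hM hk
  induction hw using Subgroup.closure_induction_right with
  | one => exact ⟨0, Nat.zero_le _, by simp [alternatingWord]⟩
  | mul_right x _ y hy ih => exact exists_mul_eq hy ih
  | mul_inv_cancel x _ y hy ih =>
    have hinv : y⁻¹ = y := by obtain rfl | rfl := hy <;> exact cs.inv_simple _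
    exact hinv.symm ▸ exists_mul_eq hy ih

theorem simple_commute_of_eq_two {i j : B} (h : M i j = 2) :
    Commute (cs.simple i) (cs.simple j) := by
  have hbraid := cs.wordProd_braidWord_eq i j
  simpa [commute_iff_eq, braidWord, M.symmetric j i, h, alternatingWord, wordProd_cons] using hbraid

end AlternatingWord

theorem closure_sr_zero_sr_one (n : ℕ) :
    Subgroup.closure {DihedralGroup.sr (0 : ZMod n), DihedralGroup.sr 1} = ⊤ := by
  set H := Subgroup.closure {DihedralGroup.sr (0 : ZMod n), DihedralGroup.sr 1}
  have sr_zero_mem : DihedralGroup.sr 0 ∈ H := Subgroup.subset_closure (.inl rfl)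
  have sr_one_mem : DihedralGroup.sr 1 ∈ H := Subgroup.subset_closure (.inr rfl)
  have r_mem (i : ZMod n) : DihedralGroup.r i ∈ H := by
    obtain ⟨k, rfl⟩ := ZMod.intCast_surjective i
    rw [← DihedralGroup.r_one_zpow]
    exact H.zpow_mem (by simpa using H.mul_mem sr_zero_mem sr_one_mem) k
  refine (Subgroup.eq_top_iff' H).2 ?_
  rintro (i | i)
  · exact r_mem i
  · simpa using H.mul_mem sr_zero_mem (r_mem i)

/-- Generators of `DihedralGroup m × ℤ/2ℤ` that satisfy the relations of the Coxeter group of type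
`I₂(m) × A₁`, indexed like its simple reflections. -/
def dihedralProdGenerator (m : ℕ) : Fin 3 → DihedralGroup m × Multiplicative (ZMod 2) :=
  ![(.sr 0, 1), (.sr 1, 1), (1, .ofAdd 1)]

theorem closure_range_dihedralProdGenerator (m : ℕ) :
    Subgroup.closure (Set.range (dihedralProdGenerator m)) = ⊤ := by
  set H := Subgroup.closure (Set.range (dihedralProdGenerator m))
  have generator_mem (i : Fin 3) : dihedralProdGenerator m i ∈ H :=
    Subgroup.subset_closure ⟨i, rfl⟩
  have inl_mem (d : DihedralGroup m) : (d, 1) ∈ H := by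
    have hle : Subgroup.closure {DihedralGroup.sr (0 : ZMod m), DihedralGroup.sr 1} ≤
        H.comap (MonoidHom.inl _ _) := by
      rw [Subgroup.closure_le]
      rintro _ (rfl | rfl)
      exacts [generator_mem 0, generator_mem 1]
    exact hle (closure_sr_zero_sr_one m ▸ Subgroup.mem_top d)
  have inr_mem (z : Multiplicative (ZMod 2)) : (1, z) ∈ H := by
    obtain rfl | rfl : z = 1 ∨ z = .ofAdd 1 := by revert z; decide
    exacts [H.one_mem, generator_mem 2]
  refine (Subgroup.eq_top_iff' H).2 fun ⟨d, z⟩ ↦ ?_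
  simpa using H.mul_mem (inl_mem d) (inr_mem z)

section DihedralTimesTwo

variable {W : Type*} [Group W] {M : CoxeterMatrix (Fin 3)} (cs : CoxeterSystem M W) {m : ℕ}

theorem isLiftable_dihedralProdGenerator (h01 : M 0 1 = m) (h02 : M 0 2 = 2) (h12 : M 1 2 = 2) :
    M.IsLiftable (dihedralProdGenerator m) := by
  have h10 : M 1 0 = m := (M.symmetric 1 0).trans h01
  have h20 : M 2 0 = 2 := (M.symmetric 2 0).trans h02
  have h21 : M 2 1 = 2 := (M.symmetric 2 1).trans h12
  have ofAdd_sq : (Multiplicative.ofAdd 1 : Multiplicative (ZMod 2)) ^ 2 = 1 := by decide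
  have sr_sq (i : ZMod m) : DihedralGroup.sr i ^ 2 = 1 := by
    rw [pow_two, DihedralGroup.sr_mul_self]
  intro i j
  fin_cases i <;> fin_cases j <;>
    simp [dihedralProdGenerator, h01, h02, h12, h10, h20, h21, ofAdd_sq, sr_sq, ← pow_two,
      DihedralGroup.r_pow]

theorem lift_dihedralProdGenerator_surjective (h : M.IsLiftable (dihedralProdGenerator m)) :
    Surjective (cs.lift ⟨dihedralProdGenerator m, h⟩) := by
  rw [← MonoidHom.range_eq_top, ← top_le_iff, ← closure_range_dihedralProdGenerator,
    Subgroup.closure_le]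
  rintro _ ⟨i, rfl⟩
  exact ⟨cs.simple i, cs.lift_apply_simple h i⟩

theorem mem_closure_or_mul_simple_mem_closure (h02 : M 0 2 = 2) (h12 : M 1 2 = 2) (w : W) :
    w ∈ Subgroup.closure {cs.simple 0, cs.simple 1} ∨
      w * cs.simple 2 ∈ Subgroup.closure {cs.simple 0, cs.simple 1} := by
  set D := Subgroup.closure {cs.simple 0, cs.simple 1}
  induction w using cs.simple_induction_right with
  | one => exact .inl D.one_mem
  | mul_simple_right w i ih =>
    have mul_simple_mem (hi : cs.simple i ∈ D) (hcomm : M i 2 = 2) :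
        w * cs.simple i ∈ D ∨ w * cs.simple i * cs.simple 2 ∈ D := by
      rw [mul_assoc, (simple_commute_of_eq_two cs hcomm).eq, ← mul_assoc]
      exact ih.imp (D.mul_mem · hi) (D.mul_mem · hi)
    fin_cases i
    · exact mul_simple_mem (Subgroup.subset_closure (.inl rfl)) h02
    · exact mul_simple_mem (Subgroup.subset_closure (.inr rfl)) h12
    · simpa using ih.symm

/-- The index of the simple reflection used in step `k` of the circuit, counted from `0`: the
pattern `0, 1, 0, 1, …, 0, 2` of length `2 * m`, repeated. -/
def circuitLetter (m k : ℕ) : Fin 3 :=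
  if 2 * m ∣ k + 1 then 2 else if Even k then 0 else 1

theorem circuitLetter_periodic (m : ℕ) : Periodic (circuitLetter m) (2 * m) := fun k ↦ by
  simp [circuitLetter, add_right_comm k, Nat.even_add]

theorem circuitLetter_of_even {k : ℕ} (hk : Even k) : circuitLetter m k = 0 := by
  have hdvd : ¬ 2 * m ∣ k + 1 := fun h ↦
    hk.add_one.not_two_dvd_nat ((dvd_mul_right 2 m).trans h)
  simp [circuitLetter, hdvd, hk]

theorem circuitLetter_surjective (hm : 1 < m) : Surjective (circuitLetter m) := by
  intro i
  fin_cases i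
  · exact ⟨0, circuitLetter_of_even (by simp)⟩
  · have hdvd : ¬ 2 * m ∣ 2 := Nat.not_dvd_of_pos_of_lt two_pos (by lia)
    exact ⟨1, by simp [circuitLetter, hdvd]⟩
  · exact ⟨2 * m - 1, by simp [circuitLetter, Nat.sub_add_cancel (show 1 ≤ 2 * m by lia)]⟩

/-- The Hamiltonian circuit of a Coxeter group of type `I₂(m) × A₁`, unrolled to a sequence on `ℕ`
of period `4 * m`. -/
def circuitWalk (m : ℕ) : ℕ → W :=
  leftWalk fun k ↦ cs.simple (circuitLetter m k)

theorem circuitWalk_succ (k : ℕ) :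
    circuitWalk cs m (k + 1) = cs.simple (circuitLetter m k) * circuitWalk cs m k :=
  rfl

theorem circuitWalk_eq_wordProd_alternatingWord {k : ℕ} (hk : k < 2 * m) :
    circuitWalk cs m k = cs.wordProd (alternatingWord 1 0 k) := by
  induction k with
  | zero => simp [circuitWalk, leftWalk, alternatingWord]
  | succ k ih =>
    have hletter : circuitLetter m k = if Even k then 0 else 1 :=
      if_neg (Nat.not_dvd_of_pos_of_lt k.succ_pos hk)
    rw [circuitWalk_succ, ih (by lia), hletter, alternatingWord_succ', wordProd_cons]

variable [NeZero m]

theorem circuitWalk_two_mul (h01 : M 0 1 = m) :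
    circuitWalk cs m (2 * m) = cs.simple 2 * cs.simple 1 := by
  have hm := NeZero.pos m
  have h10 : M 1 0 = m := (M.symmetric 1 0).trans h01
  have hlast : circuitWalk cs m (2 * m - 1) = cs.simple 1 := by
    rw [circuitWalk_eq_wordProd_alternatingWord cs (by lia),
      wordProd_alternatingWord_swap cs (by lia), h10, Nat.sub_sub_self (by lia)]
    simp [alternatingWord]
  obtain ⟨n, hn⟩ : ∃ n, 2 * m = n + 1 := ⟨2 * m - 1, by lia⟩
  rw [hn] at hlast ⊢
  rw [circuitWalk_succ, circuitLetter, if_pos hn.dvd]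
  simpa using hlast

theorem circuitWalk_add_two_mul (h01 : M 0 1 = m) (k : ℕ) :
    circuitWalk cs m (k + 2 * m) = circuitWalk cs m k * (cs.simple 2 * cs.simple 1) := by
  rw [← circuitWalk_two_mul cs h01]
  exact leftWalk_add_period ((circuitLetter_periodic m).comp cs.simple) k

theorem circuitWalk_periodic (h01 : M 0 1 = m) (h12 : M 1 2 = 2) :
    Periodic (circuitWalk cs m) (4 * m) := by
  rw [show 4 * m = 2 * m + 2 * m by ring]
  refine leftWalk_periodic ((circuitLetter_periodic m).comp cs.simple) ?_
  change circuitWalk cs m (2 * m) * circuitWalk cs m (2 * m) = 1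
  rw [circuitWalk_two_mul cs h01, ← pow_two]
  simpa only [h12] using cs.simple_mul_simple_pow' 1 2

theorem circuitWalk_surjective (h01 : M 0 1 = m) (h02 : M 0 2 = 2) (h12 : M 1 2 = 2) :
    Surjective (circuitWalk cs m) := by
  intro w
  have h10 : M 1 0 = m := (M.symmetric 1 0).trans h01
  have exists_of_mem {x : W} (hx : x ∈ Subgroup.closure {cs.simple 0, cs.simple 1}) :
      ∃ k, circuitWalk cs m k = x := by
    rw [Set.pair_comm] at hx
    obtain ⟨k, hk, rfl⟩ := exists_wordProd_alternatingWord_of_mem_closure cs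
      (h10 ▸ NeZero.ne m) hx
    exact ⟨k, circuitWalk_eq_wordProd_alternatingWord cs (h10 ▸ hk)⟩
  obtain hw | hw := mem_closure_or_mul_simple_mem_closure cs h02 h12 w
  · exact exists_of_mem hw
  · obtain ⟨k, hk⟩ := exists_of_mem
      (Subgroup.mul_mem _ hw (Subgroup.subset_closure (.inr rfl) : cs.simple 1 ∈ _))
    refine ⟨k + 2 * m, ?_⟩
    rw [circuitWalk_add_two_mul cs h01, hk, ← (simple_commute_of_eq_two cs h12).eq]
    simp [← mul_assoc]

/-- The Hamiltonian circuit map `θ`, which reads `circuitWalk` at representatives in `[0, 4m)`. -/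
def circuitMap (m : ℕ) (t : ZMod (4 * m)) : W :=
  circuitWalk cs m t.val

theorem circuitMap_natCast (h01 : M 0 1 = m) (h12 : M 1 2 = 2) (k : ℕ) :
    circuitMap cs m k = circuitWalk cs m k := by
  rw [circuitMap, ZMod.val_natCast, (circuitWalk_periodic cs h01 h12).map_mod_nat]

theorem circuitMap_natCast_add_one (h01 : M 0 1 = m) (h12 : M 1 2 = 2) (k : ℕ) :
    circuitMap cs m (k + 1) = cs.simple (circuitLetter m k) * circuitMap cs m k := by
  rw [← Nat.cast_succ, circuitMap_natCast cs h01 h12, circuitMap_natCast cs h01 h12,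
    circuitWalk_succ]

theorem circuitMap_bijective (h01 : M 0 1 = m) (h02 : M 0 2 = 2) (h12 : M 1 2 = 2) :
    Bijective (circuitMap cs m) := by
  have hsurj : Surjective (circuitMap cs m) := fun w ↦
    let ⟨k, hk⟩ := circuitWalk_surjective cs h01 h02 h12 w
    ⟨k, (circuitMap_natCast cs h01 h12 k).trans hk⟩
  have hlift := lift_dihedralProdGenerator_surjective cs
    (isLiftable_dihedralProdGenerator h01 h02 h12)
  have hcard : Nat.card (ZMod (4 * m)) =
      Nat.card (DihedralGroup m × Multiplicative (ZMod 2)) := by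
    simp only [Nat.card_prod, DihedralGroup.nat_card, Nat.card_congr Multiplicative.toAdd,
      Nat.card_zmod]
    ring
  have hbij : Bijective (cs.lift _ ∘ circuitMap cs m) :=
    (Nat.bijective_iff_surjective_and_card _).2 ⟨hlift.comp hsurj, hcard⟩
  exact ⟨hbij.injective.of_comp, hsurj⟩

end DihedralTimesTwo

theorem A2xA1_exists_special_one_convenient_hamiltonianCircuitMap_general
    {W : Type*} [Group W] {m : ℕ} [NeZero m]
    (M : CoxeterMatrix (Fin 3)) (cs : CoxeterSystem M W)
    (h12 : M 0 1 = m) (h13 : M 0 2 = 2) (h23 : M 1 2 = 2) :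
    ∃ θ : ZMod (4 * m) → W, Function.Bijective θ ∧
      (∀ t, θ (t + 1) * (θ t)⁻¹ ∈
        ({cs.simple 0, cs.simple 1, cs.simple 2} : Set W)) ∧
      (∀ t : ZMod (4 * m), θ (2 * t + 1) = cs.simple 0 * θ (2 * t)) ∧
      (∀ i : Fin 3, ∃ t, θ (t + 1) * (θ t)⁻¹ = cs.simple i) := by
  have step := circuitMap_natCast_add_one cs h12 h23
  have one_lt : 1 < m := by
    have := NeZero.ne m
    have := M.off_diagonal 0 1 (by decide)
    lia
  refine ⟨circuitMap cs m, circuitMap_bijective cs h12 h13 h23, fun t ↦ ?_, fun t ↦ ?_, fun i ↦ ?_⟩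
  · obtain ⟨k, rfl⟩ := ZMod.natCast_zmod_surjective t
    rw [step, mul_inv_cancel_right]
    generalize circuitLetter m k = i
    fin_cases i <;> simp
  · obtain ⟨k, rfl⟩ := ZMod.natCast_zmod_surjective t
    simpa [circuitLetter_of_even (even_two_mul k)] using step (2 * k)
  · obtain ⟨k, rfl⟩ := circuitLetter_surjective one_lt i
    exact ⟨k, by rw [step, mul_inv_cancel_right]⟩

/-- For the Coxeter system of type `A₂ × A₁` (Coxeter matrix `M 1 2 = 3`,
`M 1 3 = 2`, `M 2 3 = 2`, so `W ≅ S₃ × ℤ/2ℤ` has order 12), there is a Hamiltonian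
circuit map `θ : ℤ/12ℤ → W` that is `1`-convenient (`θ(2t+1) = s₁ · θ(2t)` for all
`t`) and special (every simple reflection occurs as a consecutive ratio). -/
theorem A2xA1_exists_special_one_convenient_hamiltonianCircuitMap
    {W : Type*} [Group W]
    (M : CoxeterMatrix (Fin 3)) (cs : CoxeterSystem M W)
    (h12 : M 0 1 = 3) (h13 : M 0 2 = 2) (h23 : M 1 2 = 2) :
    ∃ θ : ZMod 12 → W, Function.Bijective θ ∧
      (∀ t, θ (t + 1) * (θ t)⁻¹ ∈
        ({cs.simple 0, cs.simple 1, cs.simple 2} : Set W)) ∧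
      (∀ t : ZMod 12, θ (2 * t + 1) = cs.simple 0 * θ (2 * t)) ∧
      (∀ i : Fin 3, ∃ t, θ (t + 1) * (θ t)⁻¹ = cs.simple i) :=
  A2xA1_exists_special_one_convenient_hamiltonianCircuitMap_general M cs h12 h13 h23
end

section
/- For every n ≥ 2 there exists a bijection θ : ℤ/n!ℤ → Sym(n) (the symmetric group on n letters, of order n!) such that for every t ∈ ℤ/n!ℤ the permutation θ(t+1) ∘ θ(t)⁻¹ is an adjacent transposition (i, i+1) for some 1 ≤ i ≤ n − 1. In other words, the Cayley graph of the symmetric group with respect to the adjacent transpositions admits a Hamilton circuit. -/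
/-! The Steinhaus–Johnson–Trotter construction. A permutation of `Fin (n + 1)` is a permutation of
`Fin n` into which one further letter has been inserted at one of the `n + 1` positions. Walk along
a Hamilton circuit of the smaller Cayley graph, sweeping the new letter through all positions at
each vertex, alternately upwards and downwards: a sweep uses the transpositions of neighbouring
positions, and between sweeps the new letter sits at an end, where it leaves the other letters'
positions consecutive. As `n!` is even for `n ≥ 2`, the number of sweeps is even and the walk
closes up. -/

open Equiv

section CoveringCircuit

variable {α β : Type*} {r : α → α → Prop} {s : β → β → Prop} {N n : ℕ} {f : ℕ → α}
  {ι : Fin (n + 1) → α → β}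

/-- A closed walk of length `N` along the relation `r` that visits every element, encoded as an
`N`-periodic sequence. When `N` is the cardinality of `α`, it is a Hamilton circuit. -/
structure IsCoveringCircuit (r : α → α → Prop) (N : ℕ) (f : ℕ → α) : Prop where
  periodic : Function.Periodic f N
  surjective : Function.Surjective f
  step (t : ℕ) : r (f t) (f (t + 1))

theorem IsCoveringCircuit.exists_bijective_zmod [Finite α] [NeZero N]
    (hf : IsCoveringCircuit r N f) (hN : Nat.card α = N) :
    ∃ θ : ZMod N → α, Function.Bijective θ ∧ ∀ t, r (θ t) (θ (t + 1)) := by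
  have apply_val (t : ℕ) : f (t : ZMod N).val = f t := by
    rw [ZMod.val_natCast, hf.periodic.map_mod_nat]
  have hsurj : Function.Surjective fun t : ZMod N ↦ f t.val := fun a ↦
    let ⟨t, ht⟩ := hf.surjective a
    ⟨t, (apply_val t).trans ht⟩
  refine ⟨fun t ↦ f t.val, hsurj.bijective_of_nat_card_le (by simp [hN]), fun t ↦ ?_⟩
  have apply_succ : f (t + 1).val = f (t.val + 1) := by simpa using apply_val (t.val + 1)
  simpa only [apply_succ] using hf.step t.val

/-- The sequence running through the layers `ι 0, …, ι (Fin.last n)` at `f 0`, then in reverse order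
at `f 1`, then again upwards at `f 2`, and so on. The direction of the sweep at `f k` is encoded by
`Fin.revPerm ^ k`. -/
def boustrophedon (ι : Fin (n + 1) → α → β) (f : ℕ → α) (t : ℕ) : β :=
  ι ((Fin.revPerm ^ (t / (n + 1))) (Fin.ofNat (n + 1) t)) (f (t / (n + 1)))

theorem boustrophedon_mul_add (ι : Fin (n + 1) → α → β) (f : ℕ → α) (k : ℕ) (p : Fin (n + 1)) :
    boustrophedon ι f ((n + 1) * k + p) = ι ((Fin.revPerm ^ k) p) (f k) := by
  have hdiv : ((n + 1) * k + p) / (n + 1) = k := by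
    rw [Nat.mul_add_div n.succ_pos, Nat.div_eq_of_lt p.isLt, add_zero]
  have hmod : Fin.ofNat (n + 1) ((n + 1) * k + p) = p := by
    ext
    simp [Nat.mod_eq_of_lt p.isLt]
  rw [boustrophedon, hdiv, hmod]

theorem exists_eq_mul_add_fin (n t : ℕ) : ∃ (k : ℕ) (p : Fin (n + 1)), t = (n + 1) * k + p :=
  ⟨t / (n + 1), Fin.ofNat (n + 1) t, (Nat.div_add_mod t (n + 1)).symm⟩

theorem revPerm_pow_of_even {k : ℕ} (hk : Even k) : (Fin.revPerm : Perm (Fin n)) ^ k = 1 := by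
  obtain ⟨m, rfl⟩ := hk.two_dvd
  have hsq : (Fin.revPerm : Perm (Fin n)) ^ 2 = 1 := by
    ext
    simp [sq]
  rw [pow_mul, hsq, one_pow]

theorem revPerm_pow_of_odd {k : ℕ} (hk : Odd k) :
    (Fin.revPerm : Perm (Fin n)) ^ k = Fin.revPerm := by
  obtain ⟨m, rfl⟩ := hk
  rw [pow_succ, revPerm_pow_of_even (even_two_mul m), one_mul]

theorem boustrophedon_periodic (hf : Function.Periodic f N) (hN : Even N) :
    Function.Periodic (boustrophedon ι f) ((n + 1) * N) := by
  intro t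
  obtain ⟨k, p, rfl⟩ := exists_eq_mul_add_fin n t
  have hshift : (n + 1) * k + p + (n + 1) * N = (n + 1) * (k + N) + p := by ring
  rw [hshift, boustrophedon_mul_add, boustrophedon_mul_add, hf, pow_add, revPerm_pow_of_even hN,
    mul_one]

theorem boustrophedon_surjective (hι : Function.Surjective (Function.uncurry ι))
    (hf : Function.Surjective f) : Function.Surjective (boustrophedon ι f) := by
  intro b
  obtain ⟨⟨p, a⟩, rfl⟩ := hι b
  obtain ⟨k, rfl⟩ := hf a
  obtain ⟨q, rfl⟩ := (Fin.revPerm ^ k).surjective p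
  exact ⟨(n + 1) * k + q, boustrophedon_mul_add ι f k q⟩

theorem boustrophedon_step [Std.Symm s] (hstep : ∀ t, r (f t) (f (t + 1)))
    (hlayer : ∀ (p : Fin n) a, s (ι p.castSucc a) (ι p.succ a))
    (hbot : ∀ a b, r a b → s (ι 0 a) (ι 0 b))
    (htop : ∀ a b, r a b → s (ι (Fin.last n) a) (ι (Fin.last n) b)) (t : ℕ) :
    s (boustrophedon ι f t) (boustrophedon ι f (t + 1)) := by
  obtain ⟨k, p, rfl⟩ := exists_eq_mul_add_fin n t
  induction p using Fin.lastCases with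
  | last =>
    have hnext : (n + 1) * k + Fin.last n + 1 = (n + 1) * (k + 1) + (0 : Fin (n + 1)) := by
      simp only [Fin.val_last, Fin.val_zero]
      ring
    have hturn : (Fin.revPerm ^ (k + 1)) 0 = (Fin.revPerm ^ k) (Fin.last n) := by
      simp [pow_succ]
    rw [hnext, boustrophedon_mul_add, boustrophedon_mul_add, hturn]
    rcases k.even_or_odd with hk | hk
    · rw [revPerm_pow_of_even hk]
      exact htop _ _ (hstep k)
    · rw [revPerm_pow_of_odd hk, Fin.revPerm_apply, Fin.rev_last]
      exact hbot _ _ (hstep k)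
  | cast p =>
    have hnext : (n + 1) * k + p.castSucc + 1 = (n + 1) * k + p.succ := by
      rw [Fin.val_castSucc, Fin.val_succ, add_assoc]
    rw [hnext, boustrophedon_mul_add, boustrophedon_mul_add]
    rcases k.even_or_odd with hk | hk
    · rw [revPerm_pow_of_even hk]
      exact hlayer p _
    · rw [revPerm_pow_of_odd hk, Fin.revPerm_apply, Fin.revPerm_apply, Fin.rev_castSucc,
        Fin.rev_succ]
      exact symm_of s (hlayer p.rev _)

theorem IsCoveringCircuit.boustrophedon [Std.Symm s] (hf : IsCoveringCircuit r N f) (hN : Even N)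
    (hι : Function.Surjective (Function.uncurry ι))
    (hlayer : ∀ (p : Fin n) a, s (ι p.castSucc a) (ι p.succ a))
    (hbot : ∀ a b, r a b → s (ι 0 a) (ι 0 b))
    (htop : ∀ a b, r a b → s (ι (Fin.last n) a) (ι (Fin.last n) b)) :
    IsCoveringCircuit s ((n + 1) * N) (boustrophedon ι f) where
  periodic := boustrophedon_periodic hf.periodic hN
  surjective := boustrophedon_surjective hι hf.surjective
  step := boustrophedon_step hf.step hlayer hbot htop

end CoveringCircuit

section InsertLetter

variable {n : ℕ}

/-- The permutation of `Fin (n + 1)` sending the new letter `0` to position `p`, and the remaining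
letters to the other positions in the order prescribed by `τ`. Here `decomposeFin.symm (0, τ)` is
`τ` acting on the letters other than `0`. -/
def insertLetter (p : Fin (n + 1)) (τ : Perm (Fin n)) : Perm (Fin (n + 1)) :=
  p.cycleRange⁻¹ * Perm.decomposeFin.symm (0, τ)

@[simp]
theorem insertLetter_apply_zero (p : Fin (n + 1)) (τ : Perm (Fin n)) : insertLetter p τ 0 = p := by
  simp [insertLetter]

@[simp]
theorem insertLetter_apply_succ (p : Fin (n + 1)) (τ : Perm (Fin n)) (i : Fin n) :
    insertLetter p τ i.succ = p.succAbove (τ i) := by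
  simp [insertLetter]

theorem uncurry_insertLetter_surjective :
    Function.Surjective (Function.uncurry (insertLetter (n := n))) := by
  intro σ
  obtain ⟨⟨p, τ⟩, h⟩ := Perm.decomposeFin.symm.surjective ((σ 0).cycleRange * σ)
  obtain rfl : p = 0 := by
    rw [← Perm.decomposeFin_symm_apply_zero p τ, h, Perm.mul_apply, Fin.cycleRange_self]
  exact ⟨(σ 0, τ), by simp [insertLetter, h]⟩

theorem insertLetter_swap_mul (p : Fin (n + 1)) (i j : Fin n) (τ : Perm (Fin n)) :
    insertLetter p (swap i j * τ) = swap (p.succAbove i) (p.succAbove j) * insertLetter p τ := by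
  ext x
  induction x using Fin.cases with
  | zero => simp [swap_apply_of_ne_of_ne (p.ne_succAbove _) (p.ne_succAbove _)]
  | succ k => simp [Fin.succAbove_right_injective.swap_apply]

theorem succ_succAbove_eq_swap_castSucc_succAbove (p y : Fin n) :
    p.succ.succAbove y = swap p.castSucc p.succ (p.castSucc.succAbove y) := by
  rcases lt_trichotomy y p with h | rfl | h
  · rw [Fin.succAbove_succ_of_le _ _ h.le, Fin.succAbove_castSucc_of_lt _ _ h,
      swap_apply_of_ne_of_ne (Fin.castSucc_lt_castSucc_iff.2 h).ne
        (Fin.castSucc_lt_succ_iff.2 h.le).ne]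
  · simp
  · rw [Fin.succAbove_succ_of_lt _ _ h, Fin.succAbove_castSucc_of_le _ _ h.le,
      swap_apply_of_ne_of_ne (Fin.castSucc_lt_succ_iff.2 h.le).ne' (Fin.succ_lt_succ_iff.2 h).ne']

theorem insertLetter_succ_eq_swap_mul (p : Fin n) (τ : Perm (Fin n)) :
    insertLetter p.succ τ = swap p.castSucc p.succ * insertLetter p.castSucc τ := by
  ext x
  induction x using Fin.cases with
  | zero => simp
  | succ k => simp [succ_succAbove_eq_swap_castSucc_succAbove]

end InsertLetter

section AdjacentTransposition

variable {n : ℕ}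

/-- Adjacency in the Cayley graph of `Sym(n)` with respect to the adjacent transpositions acting by
left multiplication. -/
def AdjacentSwapRel (σ τ : Perm (Fin n)) : Prop :=
  ∃ i j : Fin n, (j : ℕ) = (i : ℕ) + 1 ∧ τ * σ⁻¹ = swap i j

instance : Std.Symm (AdjacentSwapRel (n := n)) where
  symm := by
    rintro σ τ ⟨i, j, hij, h⟩
    exact ⟨i, j, hij, by rw [← swap_inv, ← h, mul_inv_rev, inv_inv]⟩

theorem adjacentSwapRel_insertLetter_castSucc_succ (p : Fin n) (τ : Perm (Fin n)) :
    AdjacentSwapRel (insertLetter p.castSucc τ) (insertLetter p.succ τ) :=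
  ⟨p.castSucc, p.succ, by simp, by rw [insertLetter_succ_eq_swap_mul, mul_inv_cancel_right]⟩

theorem AdjacentSwapRel.insertLetter {p : Fin (n + 1)}
    (hp : ∀ i j : Fin n, (j : ℕ) = i + 1 → (p.succAbove j : ℕ) = p.succAbove i + 1)
    {σ τ : Perm (Fin n)} (h : AdjacentSwapRel σ τ) :
    AdjacentSwapRel (insertLetter p σ) (insertLetter p τ) := by
  obtain ⟨i, j, hij, h⟩ := h
  refine ⟨p.succAbove i, p.succAbove j, hp i j hij, ?_⟩
  rw [eq_mul_of_mul_inv_eq h, insertLetter_swap_mul, mul_inv_cancel_right]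

theorem isCoveringCircuit_swap_pow :
    IsCoveringCircuit AdjacentSwapRel 2 fun t ↦ (swap 0 1 : Perm (Fin 2)) ^ t where
  periodic t := by simp [pow_add, sq]
  surjective σ := by
    have h : σ = 1 ∨ σ = swap 0 1 := by decide +revert
    rcases h with rfl | rfl
    exacts [⟨0, pow_zero _⟩, ⟨1, pow_one _⟩]
  step t := ⟨0, 1, rfl, by rw [pow_succ', mul_inv_cancel_right]⟩

theorem exists_isCoveringCircuit_adjacentSwapRel (hn : 2 ≤ n) :
    ∃ f : ℕ → Perm (Fin n), IsCoveringCircuit AdjacentSwapRel n.factorial f := by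
  induction n, hn using Nat.le_induction with
  | base => exact ⟨_, isCoveringCircuit_swap_pow⟩
  | succ n hn ih =>
    obtain ⟨f, hf⟩ := ih
    have heven : Even n.factorial := even_iff_two_dvd.2 (Nat.dvd_factorial two_pos hn)
    refine ⟨boustrophedon insertLetter f, hf.boustrophedon heven uncurry_insertLetter_surjective
      adjacentSwapRel_insertLetter_castSucc_succ ?_ ?_⟩
    · exact fun _ _ ↦ AdjacentSwapRel.insertLetter (by simp)
    · exact fun _ _ ↦ AdjacentSwapRel.insertLetter (by simp)

end AdjacentTransposition

/-- The Cayley graph of the symmetric group `Sym(n)` (`n ≥ 2`) with respect to the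
adjacent transpositions admits a Hamilton circuit: there is a bijection
`θ : ℤ/n!ℤ → Sym(n)` such that each consecutive ratio `θ(t+1) ∘ θ(t)⁻¹` is an
adjacent transposition `(i, i+1)`. -/
theorem symmetricGroup_adjacentTranspositions_hamiltonCircuit
    (n : ℕ) (hn : 2 ≤ n) :
    ∃ θ : ZMod (Nat.factorial n) → Equiv.Perm (Fin n),
      Function.Bijective θ ∧
      ∀ t, ∃ i j : Fin n, (j : ℕ) = (i : ℕ) + 1 ∧
        θ (t + 1) * (θ t)⁻¹ = Equiv.swap i j := by
  have : NeZero n.factorial := ⟨n.factorial_ne_zero⟩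
  obtain ⟨f, hf⟩ := exists_isCoveringCircuit_adjacentSwapRel hn
  exact hf.exists_bijective_zmod (by rw [Nat.card_perm, Nat.card_fin])
end

section
/- For every finite Coxeter system (W, S) over a nonempty finite index set B, there exists a special Hamiltonian circuit map: a bijection θ : ℤ/kℤ → W with k = |W| such that θ(t+1)·θ(t)⁻¹ is a simple reflection for every t, and moreover for every index i ∈ B there exists t with θ(t+1) = sᵢ · θ(t). -/
/-!
Call a set of group elements a circuit if it can be traversed cyclically, each step being a left
multiplication by a generator. Two disjoint circuits that contain opposite edges of a quadrilateral
of the Cayley graph merge into one, by exchanging these edges for the other two.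

Induct on the set of generators. Let `r` be a leaf of the Coxeter diagram and `T` the remaining
generators; all of `T` but at most one generator `k` commutes with `r`. Start from a circuit on the
parabolic subgroup `⟨T⟩` and absorb its right cosets one by one. As long as `r` leads from some `x`
out of the union `U` absorbed so far, one of the two circuit edges at `x` has a label `s ≠ k`. It
is an edge of the square spanned by the commuting `s` and `r`, and the opposite edge lies on a
translate of the circuit of `⟨T⟩`, because that circuit uses every label. The last property is
automatic: a circuit omitting a label would stay in a proper parabolic subgroup. The induction
starts from one or two generators, where left multiplications by the two alternate.

A leaf exists because averaging over the finite group gives a positive definite form that is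
invariant under the geometric representation. Pairing the sum of the simple roots with itself shows
that it pairs positively with some simple coroot, which is impossible if every node has two
neighbours.
-/

namespace CoxeterCircuit

open Equiv Equiv.Perm MulAction MulOpposite Subgroup
open scoped Pointwise

section Permutations

variable {α : Type*} {e f g : Perm α} {s t : Set α} {p q : α}

lemma sameCycle_of_eqOn_diff_singleton (hs : s.Finite) (he : e.IsCycleOn s) (hp : p ∈ s)
    (hef : Set.EqOn e f (s \ {p})) {x : α} (hx : x ∈ s) : f.SameCycle x p := by
  obtain ⟨n, hn⟩ := he.exists_pow_eq' hs hx hp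
  induction n generalizing x with
  | zero => exact hn ▸ SameCycle.refl f x
  | succ n ih =>
    obtain rfl | hxp := eq_or_ne x p
    · exact SameCycle.refl f x
    · rw [pow_succ, Perm.mul_apply] at hn
      have hstep : f x = e x := (hef ⟨hx, hxp⟩).symm
      exact sameCycle_apply_left.1 (hstep ▸ ih (he.1.mapsTo hx) hn)

lemma isCycleOn_congr (hs : s.Finite) (he : e.IsCycleOn s) (hef : Set.EqOn e f s) :
    f.IsCycleOn s :=
  ⟨he.1.congr hef, fun _ hx _ hy ↦
    sameCycle_of_eqOn_diff_singleton hs he hy (hef.mono Set.sdiff_subset) hx⟩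

lemma isCycleOn_mul_swap [DecidableEq α] (hs : s.Finite) (ht : t.Finite) (hst : Disjoint s t)
    (hes : e.IsCycleOn s) (het : e.IsCycleOn t) (hp : p ∈ s) (hq : q ∈ t) :
    (e * swap p q).IsCycleOn (s ∪ t) := by
  have happly : ∀ {x}, x ≠ p → x ≠ q → e x = (e * swap p q) x := fun hxp hxq ↦ by
    rw [Perm.mul_apply, swap_apply_of_ne_of_ne hxp hxq]
  have hs_p : ∀ x ∈ s, (e * swap p q).SameCycle x p := fun x hx ↦
    sameCycle_of_eqOn_diff_singleton hs hes hp
      (fun y hy ↦ happly hy.2 (hst.ne_of_mem hy.1 hq)) hx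
  have ht_q : ∀ x ∈ t, (e * swap p q).SameCycle x q := fun x hx ↦
    sameCycle_of_eqOn_diff_singleton ht het hq
      (fun y hy ↦ happly (hst.ne_of_mem hp hy.1).symm hy.2) hx
  have hpq : (e * swap p q).SameCycle p q := by
    rw [← sameCycle_apply_left, Perm.mul_apply, swap_apply_left]
    exact ht_q _ (het.1.mapsTo hq)
  have hall : ∀ x ∈ s ∪ t, (e * swap p q).SameCycle x q := by
    rintro x (hx | hx)
    exacts [(hs_p x hx).trans hpq, ht_q x hx]
  have hbij : Set.BijOn e (s ∪ t) (s ∪ t) := hes.1.union het.1 e.injective.injOn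
  refine ⟨?_, fun x hx y hy ↦ (hall x hx).trans (hall y hy).symm⟩
  rw [Perm.coe_mul]
  exact hbij.comp (swap_bijOn_self (by simp [hp, hq]))

lemma exists_eqOn_eqOn (hf : ∀ x, f x ∈ s ↔ x ∈ s) (hg : ∀ x, g x ∈ t ↔ x ∈ t)
    (hst : Disjoint s t) : ∃ e : Perm α, Set.EqOn e f s ∧ Set.EqOn e g t := by
  classical
  refine ⟨ofSubtype (f.subtypePerm hf) * ofSubtype (g.subtypePerm hg), fun x hx ↦ ?_,
    fun x hx ↦ ?_⟩
  · rw [Perm.mul_apply, ofSubtype_apply_of_not_mem _ (hst.notMem_of_mem_left hx),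
      ofSubtype_apply_of_mem _ hx, subtypePerm_apply]
  · rw [Perm.mul_apply, ofSubtype_apply_of_mem _ hx, subtypePerm_apply,
      ofSubtype_apply_of_not_mem _ (hst.notMem_of_mem_right ((hg x).2 hx))]

lemma subset_of_isCycleOn (hs : s.Finite) (he : e.IsCycleOn s) (hps : p ∈ s) (hpt : p ∈ t)
    (hmaps : ∀ x ∈ s, x ∈ t → e x ∈ t) : s ⊆ t := by
  intro y hy
  obtain ⟨n, rfl⟩ := he.exists_pow_eq' hs hps hy
  have hiter : Set.MapsTo e (s ∩ t) (s ∩ t) := fun x hx ↦ ⟨he.1.mapsTo hx.1, hmaps x hx.1 hx.2⟩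
  exact (hiter.iterate n ⟨hps, hpt⟩).2

lemma exists_zmod_enumeration [Finite α] [Nonempty α] (he : e.IsCycleOn Set.univ) :
    ∃ θ : ZMod (Nat.card α) → α, Function.Bijective θ ∧ ∀ t, θ (t + 1) = e (θ t) := by
  classical
  have := Fintype.ofFinite α
  have : NeZero (Nat.card α) := ⟨Nat.card_pos.ne'⟩
  let a : α := Classical.arbitrary α
  have hpow : ∀ m n : ℕ, (e ^ m) a = (e ^ n) a ↔ (m : ZMod (Nat.card α)) = n := fun m n ↦ by
    rw [ZMod.natCast_eq_natCast_iff, Nat.card_eq_fintype_card, ← Finset.card_univ]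
    exact IsCycleOn.pow_apply_eq_pow_apply (by simpa using he) (Finset.mem_univ a)
  refine ⟨fun t ↦ (e ^ t.val) a, ?_, fun t ↦ ?_⟩
  · refine Function.Injective.bijective_of_nat_card_le (fun t u htu ↦ ?_) (by simp)
    simpa using (hpow _ _).1 htu
  · rw [← Perm.mul_apply, ← pow_succ', hpow]
    simp

end Permutations

section Circuits

variable {G : Type*} [Group G] {S T U V : Set G} {e f : Perm G} {p q r k x : G}

/-- `e` traverses `U` as a Hamiltonian circuit of the Cayley graph of left multiplications by `S`:
it permutes `U` in a single cycle, and each step multiplies by an element of `S` on the left.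
The values of `e` outside `U` are irrelevant. -/
structure IsCircuitOn (S U : Set G) (e : Perm G) : Prop where
  finite : U.Finite
  isCycleOn : e.IsCycleOn U
  exists_label : ∀ x ∈ U, ∃ s ∈ S, e x = s * x

lemma IsCircuitOn.mono (he : IsCircuitOn S U e) (hST : S ⊆ T) : IsCircuitOn T U e :=
  ⟨he.finite, he.isCycleOn, fun x hx ↦ (he.exists_label x hx).imp fun _ hs ↦ ⟨hST hs.1, hs.2⟩⟩

lemma IsCircuitOn.translate (he : IsCircuitOn S U e) (y : G) :
    IsCircuitOn S (op y • U) (toPerm (op y) * e * (toPerm (op y))⁻¹) := by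
  refine ⟨he.finite.smul_set, he.isCycleOn.conj, ?_⟩
  rintro _ ⟨x, hx, rfl⟩
  obtain ⟨s, hs, hsx⟩ := he.exists_label x hx
  exact ⟨s, hs, by simp [hsx, mul_assoc]⟩

lemma IsCircuitOn.exists_rightCoset {H : Subgroup G} {s h : G} (he : IsCircuitOn S H e)
    (hh : h ∈ H) (hsh : e h = s * h) (q : G) :
    ∃ f, IsCircuitOn S (op q • (H : Set G)) f ∧ f q = s * q := by
  have hcoset : op (h⁻¹ * q) • (H : Set G) = op q • (H : Set G) :=
    rightCoset_eq_iff H |>.2 (by simpa using hh)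
  exact ⟨_, hcoset ▸ he.translate (h⁻¹ * q), by simp [hsh, mul_assoc]⟩

lemma IsCircuitOn.subset_closure (he : IsCircuitOn S U e) (hU : 1 ∈ U) :
    U ⊆ closure S := by
  refine subset_of_isCycleOn he.finite he.isCycleOn hU (one_mem _) fun x hx hxS ↦ ?_
  obtain ⟨s, hs, hsx⟩ := he.exists_label x hx
  exact hsx ▸ mul_mem (Subgroup.subset_closure hs) hxS

lemma IsCircuitOn.exists_eq_mul (he : IsCircuitOn S (closure S) e) (hr : r ∈ S)
    (hrS : r ∉ closure (S \ {r})) : ∃ x ∈ closure S, e x = r * x := by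
  by_contra! hne
  have he' : IsCircuitOn (S \ {r}) (closure S) e := ⟨he.finite, he.isCycleOn, fun x hx ↦ by
    obtain ⟨s, hs, hsx⟩ := he.exists_label x hx
    exact ⟨s, ⟨hs, fun hsr ↦ hne x hx (hsr ▸ hsx)⟩, hsx⟩⟩
  exact hrS (he'.subset_closure (one_mem _) (Subgroup.subset_closure hr))

/-- Exchange of opposite edges of the quadrilateral `p`, `e p`, `q`, `f q`. -/
lemma IsCircuitOn.exists_union (he : IsCircuitOn S U e) (hf : IsCircuitOn S V f)
    (hUV : Disjoint U V) (hp : p ∈ U) (hq : q ∈ V) (hfq : ∃ s ∈ S, f q = s * p)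
    (hep : ∃ s ∈ S, e p = s * q) : ∃ g, IsCircuitOn S (U ∪ V) g := by
  classical
  obtain ⟨g, hge, hgf⟩ := exists_eqOn_eqOn (fun _ ↦ he.isCycleOn.apply_mem_iff)
    (fun _ ↦ hf.isCycleOn.apply_mem_iff) hUV
  refine ⟨g * swap p q, he.finite.union hf.finite,
    isCycleOn_mul_swap he.finite hf.finite hUV (isCycleOn_congr he.finite he.isCycleOn hge.symm)
    (isCycleOn_congr hf.finite hf.isCycleOn hgf.symm) hp hq, fun x hx ↦ ?_⟩
  rw [Perm.mul_apply]
  obtain rfl | hxp := eq_or_ne x p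
  · rwa [swap_apply_left, hgf hq]
  obtain rfl | hxq := eq_or_ne x q
  · rwa [swap_apply_right, hge hp]
  rw [swap_apply_of_ne_of_ne hxp hxq]
  obtain hxU | hxV := hx
  · exact hge hxU ▸ he.exists_label x hxU
  · exact hgf hxV ▸ hf.exists_label x hxV

lemma mul_mem_iff_of_le_stabilizer {H : Subgroup G} (hH : H ≤ stabilizer G U)
    {h : G} (hh : h ∈ H) : h * x ∈ U ↔ x ∈ U :=
  mem_stabilizer_set.1 (hH hh) x

lemma IsCircuitOn.exists_label_ne {a : G} (he : IsCircuitOn S U e)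
    (hS : ∀ s ∈ S, s * s = 1) (hx : x ∈ U) (hax : a * x ∈ U) (ha1 : a ≠ 1) (hak : a ≠ k) :
    ∃ p ∈ U, ∃ s ∈ S, s ≠ k ∧ e p = s * p ∧ (p = x ∨ p = s * x) := by
  obtain ⟨i, hi, hix⟩ := he.exists_label x hx
  have hzU : e.symm x ∈ U := he.isCycleOn.apply_mem_iff.1 (by simpa using hx)
  obtain ⟨j, hj, hjz⟩ := he.exists_label _ hzU
  rw [apply_symm_apply] at hjz
  have hzj : e.symm x = j * x := by
    nth_rw 2 [hjz]
    rw [← mul_assoc, hS j hj, one_mul]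
  by_cases hik : i = k
  swap
  · exact ⟨x, hx, i, hi, hik, hix, .inl rfl⟩
  by_cases hjk : j = k
  swap
  · exact ⟨e.symm x, hzU, j, hj, hjk, by rwa [apply_symm_apply], .inr hzj⟩
  subst hik hjk
  have hpair : U ⊆ {x, j * x} := by
    refine subset_of_isCycleOn he.finite he.isCycleOn hx (.inl rfl) ?_
    rintro _ - (rfl | rfl)
    · exact .inr hix
    · exact .inl (by rw [← hzj, apply_symm_apply])
  rcases hpair hax with h | h
  · exact absurd (mul_eq_right.1 h) ha1
  · exact absurd (mul_right_cancel h) hak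

lemma IsCircuitOn.exists_commute_edge {a : G} (he : IsCircuitOn (insert r T) U e)
    (hTU : closure T ≤ stabilizer G U) (hS : ∀ s ∈ insert r T, s * s = 1)
    (hcomm : ∀ t ∈ T, t ≠ k → Commute t r) (ha : a ∈ T) (ha1 : a ≠ 1) (hak : a ≠ k)
    (hx : x ∈ U) (hrx : r * x ∉ U) :
    ∃ p ∈ U, r * p ∉ U ∧ ∃ s ∈ T, Commute s r ∧ e p = s * p := by
  have hmem : ∀ {t y}, t ∈ T → (t * y ∈ U ↔ y ∈ U) := fun ht ↦
    mul_mem_iff_of_le_stabilizer hTU (Subgroup.subset_closure ht)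
  obtain ⟨p, hp, s, hs, hsk, hsp, hpx⟩ :=
    he.exists_label_ne hS hx ((hmem ha).2 hx) ha1 hak
  obtain rfl | hsT := hs
  · obtain rfl | rfl := hpx
    · exact absurd (hsp ▸ he.isCycleOn.1.mapsTo hp) hrx
    · exact absurd hp hrx
  have hsr : Commute s r := hcomm s hsT hsk
  refine ⟨p, hp, ?_, s, hsT, hsr, hsp⟩
  obtain rfl | rfl := hpx
  · exact hrx
  · rwa [← mul_assoc, ← hsr.eq, mul_assoc, hmem hsT]

lemma IsCircuitOn.exists_ssuperset {a : G} {φ : Perm G}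
    (he : IsCircuitOn (insert r T) U e) (hTU : closure T ≤ stabilizer G U)
    (hφ : IsCircuitOn T (closure T) φ) (hφT : ∀ t ∈ T, ∃ h ∈ closure T, φ h = t * h)
    (hS : ∀ s ∈ insert r T, s * s = 1) (hcomm : ∀ t ∈ T, t ≠ k → Commute t r)
    (ha : a ∈ T) (ha1 : a ≠ 1) (hak : a ≠ k) (hx : x ∈ U) (hrx : r * x ∉ U) :
    ∃ U', U ⊂ U' ∧ closure T ≤ stabilizer G U' ∧
      ∃ e', IsCircuitOn (insert r T) U' e' := by
  obtain ⟨p, hp, hrp, s, hs, hsr, hep⟩ := he.exists_commute_edge hTU hS hcomm ha ha1 hak hx hrx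
  obtain ⟨h, hh, hφh⟩ := hφT s hs
  -- The square `p`, `s * p`, `q`, `r * p` joins `U` to the right coset of `q`.
  obtain ⟨q, hq⟩ : ∃ q, q = s * (r * p) := ⟨_, rfl⟩
  obtain ⟨f, hf, hfq⟩ := hφ.exists_rightCoset hh hφh q
  have hqV := mem_own_rightCoset (closure T).toSubmonoid q
  have hqU : q ∉ U := fun hqU ↦
    hrp ((mul_mem_iff_of_le_stabilizer hTU (Subgroup.subset_closure hs)).1 (hq ▸ hqU))
  have hUV : Disjoint U (op q • (closure T : Set G)) := by
    refine Set.disjoint_left.2 fun z hzU hzV ↦ hqU ?_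
    rw [mem_rightCoset_iff, SetLike.mem_coe, ← inv_mem_iff, mul_inv_rev, inv_inv] at hzV
    simpa using (mul_mem_iff_of_le_stabilizer hTU hzV).2 hzU
  have hfq_eq : f q = r * p := by
    rw [hfq, hq, ← mul_assoc, hS s (.inr hs), one_mul]
  have hep_eq : e p = r * q := by
    rw [hep, hq, ← mul_assoc, ← mul_assoc, ← hsr.eq, mul_assoc s, hS r (.inl rfl), mul_one]
  refine ⟨U ∪ op q • (closure T : Set G),
    Set.ssubset_iff_subset_ne.2 ⟨Set.subset_union_left, fun hU ↦ hqU (hU ▸ .inr hqV)⟩,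
    (le_inf hTU ?_).trans stabilizer_inf_stabilizer_le_stabilizer_union,
    he.exists_union (hf.mono (Set.subset_insert _ _)) hUV hp hqV ⟨r, .inl rfl, hfq_eq⟩
      ⟨r, .inl rfl, hep_eq⟩⟩
  exact (stabilizer_subgroup _).ge.trans (le_stabilizer_smul_right _ _)

lemma exists_isCircuitOn_closure_insert [Finite G] {a : G} {φ : Perm G}
    (hφ : IsCircuitOn T (closure T) φ) (hφT : ∀ t ∈ T, ∃ h ∈ closure T, φ h = t * h)
    (hS : ∀ s ∈ insert r T, s * s = 1) (hcomm : ∀ t ∈ T, t ≠ k → Commute t r)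
    (ha : a ∈ T) (ha1 : a ≠ 1) (hak : a ≠ k) :
    ∃ e, IsCircuitOn (insert r T) (closure (insert r T)) e := by
  obtain ⟨U, ⟨hU1, hTU, e, he⟩, hmax⟩ := (Set.toFinite {U : Set G | 1 ∈ U ∧
    closure T ≤ stabilizer G U ∧ ∃ e, IsCircuitOn (insert r T) U e}).exists_maximal
    ⟨closure T, one_mem _, (stabilizer_subgroup _).ge, φ, hφ.mono (Set.subset_insert _ _)⟩
  have hrU : r ∈ stabilizer G U := by
    refine (mem_stabilizer_set' (Set.toFinite U)).2 fun x hx ↦ ?_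
    by_contra hrx
    obtain ⟨U', hUU', hTU', he'⟩ := he.exists_ssuperset hTU hφ hφT hS hcomm ha ha1 hak hx hrx
    exact hUU'.not_subset (hmax ⟨hUU'.subset hU1, hTU', he'⟩ hUU'.subset)
  have hle : closure (insert r T) ≤ stabilizer G U :=
    (closure_le _).2 (Set.insert_subset hrU ((closure_le _).1 hTU))
  have hUeq : (closure (insert r T) : Set G) = U :=
    Set.Subset.antisymm (fun w hw ↦ by simpa using (mul_mem_iff_of_le_stabilizer hle hw).2 hU1)
      (he.subset_closure hU1)
  exact ⟨e, hUeq ▸ he⟩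

lemma isCircuitOn_closure (hfin : (closure S : Set G).Finite)
    (hlabel : ∀ x, ∃ s ∈ S, e x = s * x)
    (hedge : ∀ s ∈ S, ∀ x, e x = s * x ∨ e (s * x) = x) : IsCircuitOn S (closure S) e := by
  have hmem : ∀ x, e x ∈ closure S ↔ x ∈ closure S := fun x ↦ by
    obtain ⟨s, hs, hsx⟩ := hlabel x
    exact hsx ▸ mul_mem_cancel_left (Subgroup.subset_closure hs)
  have hsame : ∀ w ∈ closure S, ∀ x, e.SameCycle x (w * x) := by
    intro w hw
    induction hw using closure_induction with
    | mem s hs =>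
      intro x
      obtain h | h := hedge s hs x
      · exact h ▸ sameCycle_apply_right.2 (SameCycle.refl e x)
      · exact sameCycle_apply_right.1 (h.symm ▸ SameCycle.refl e x)
    | one => exact fun x ↦ by rw [one_mul]
    | mul u v _ _ hu hv => exact fun x ↦ mul_assoc u v x ▸ (hv x).trans (hu (v * x))
    | inv u _ hu => exact fun x ↦ by simpa using (hu (u⁻¹ * x)).symm
  refine ⟨hfin, ⟨⟨fun x ↦ (hmem x).2, e.injective.injOn, fun y hy ↦ ?_⟩, fun x hx y hy ↦ ?_⟩,
    fun x _ ↦ hlabel x⟩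
  · exact ⟨e.symm y, (hmem _).1 (by simpa using hy), apply_symm_apply e y⟩
  · simpa using hsame (y * x⁻¹) (mul_mem hy (inv_mem hx)) x

lemma exists_isCircuitOn_closure_pair {a b : G} (hfin : (closure {a, b} : Set G).Finite)
    (ha : a * a = 1) (hb : b * b = 1) (χ : G →* ℤˣ) (hχa : χ a = -1) (hχb : χ b = -1) :
    ∃ e, IsCircuitOn {a, b} (closure {a, b}) e := by
  have haa : ∀ x, a * (a * x) = x := fun x ↦ by rw [← mul_assoc, ha, one_mul]
  have hbb : ∀ x, b * (b * x) = x := fun x ↦ by rw [← mul_assoc, hb, one_mul]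
  let e : Perm G :=
    { toFun x := if χ x = 1 then a * x else b * x
      invFun x := if χ x = 1 then b * x else a * x
      left_inv x := by
        obtain hx | hx := Int.units_eq_one_or (χ x) <;> simp [hx, hχa, hχb, haa, hbb]
      right_inv x := by
        obtain hx | hx := Int.units_eq_one_or (χ x) <;> simp [hx, hχa, hχb, haa, hbb] }
  refine ⟨e, isCircuitOn_closure hfin (fun x ↦ ?_) ?_⟩
  · obtain hx | hx := Int.units_eq_one_or (χ x) <;> simp [e, hx]
  · rintro c (rfl | rfl) x <;> obtain hx | hx := Int.units_eq_one_or (χ x)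
    exacts [.inl (by simp [e, hx]), .inr (by simp [e, hx, hχa, haa]),
      .inr (by simp [e, hx, hχb, hbb]), .inl (by simp [e, hx])]

end Circuits

section Reflections

variable {m : ℕ}

lemma sin_two_pi_div_pos (hm : 3 ≤ m) : 0 < Real.sin (2 * Real.pi / m) := by
  have hm' : (3 : ℝ) ≤ m := by exact_mod_cast hm
  refine Real.sin_pos_of_pos_of_lt_pi (by positivity) ?_
  rw [div_lt_iff₀ (by linarith)]
  nlinarith [Real.pi_pos]

lemma eval_chebyshevS_eq_div (hm : 3 ≤ m) (n : ℤ) :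
    (Polynomial.Chebyshev.S ℝ n).eval (2 * Real.cos (2 * Real.pi / m)) =
      Real.sin ((n + 1) * (2 * Real.pi / m)) / Real.sin (2 * Real.pi / m) := by
  rw [eq_div_iff (sin_two_pi_div_pos hm).ne', Polynomial.Chebyshev.S_two_mul_real_cos]

lemma eval_chebyshevS_of_even (hm : 3 ≤ m) {k : ℕ} (hk : m = 2 * k) :
    (Polynomial.Chebyshev.S ℝ (k - 1)).eval (2 * Real.cos (2 * Real.pi / m)) = 0 := by
  have hk0 : (k : ℝ) ≠ 0 := by exact_mod_cast (by omega : k ≠ 0)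
  have hangle : (((k : ℤ) - 1 : ℤ) + 1 : ℝ) * (2 * Real.pi / m) = Real.pi := by
    rw [hk]
    push_cast
    field_simp
    ring
  rw [eval_chebyshevS_eq_div hm, hangle, Real.sin_pi, zero_div]

lemma eval_chebyshevS_add_of_odd (hm : 3 ≤ m) {k : ℕ} (hk : m = 2 * k + 1) :
    (Polynomial.Chebyshev.S ℝ k).eval (2 * Real.cos (2 * Real.pi / m)) +
      (Polynomial.Chebyshev.S ℝ (k - 1)).eval (2 * Real.cos (2 * Real.pi / m)) = 0 := by
  have hm0 : (m : ℝ) ≠ 0 := by exact_mod_cast (by omega : m ≠ 0)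
  have hangle : ((k : ℤ) + 1 : ℝ) * (2 * Real.pi / m) =
      2 * Real.pi - (((k : ℤ) - 1 : ℤ) + 1) * (2 * Real.pi / m) := by
    rw [hk] at hm0 ⊢
    push_cast at hm0 ⊢
    field_simp
    ring
  rw [eval_chebyshevS_eq_div hm, eval_chebyshevS_eq_div hm, hangle, Real.sin_two_pi_sub,
    neg_div, neg_add_cancel]

variable {V : Type*} [AddCommGroup V]

lemma reflection_mul_reflection_pow_eq_one [Module ℝ V] {x y : V} {f g : Module.Dual ℝ V}
    (hf : f x = 2) (hg : g y = 2) (hm : 3 ≤ m)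
    (hfg : f y * g x = 4 * Real.cos (Real.pi / m) ^ 2) :
    (Module.reflection hf * Module.reflection hg) ^ m = 1 := by
  have ht : 2 * Real.cos (2 * Real.pi / m) = f y * g x - 2 := by
    rw [hfg, mul_div_assoc, Real.cos_two_mul]
    ring
  ext z
  rw [Module.reflection_mul_reflection_pow_apply hf hg m z _ ht]
  obtain ⟨k, hk | hk⟩ := Nat.even_or_odd' m
  · have hfloor₂ : ((m : ℤ) - 2) / 2 = k - 1 := by lia
    have hfloor₁ : ((m : ℤ) - 1) / 2 = k - 1 := by lia
    simp [hfloor₁, hfloor₂, eval_chebyshevS_of_even hm hk]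
  · have hfloor₃ : ((m : ℤ) - 3) / 2 = k - 1 := by lia
    have hfloor₂ : ((m : ℤ) - 2) / 2 = k - 1 := by lia
    have hfloor₁ : ((m : ℤ) - 1) / 2 = k := by lia
    have hfloor₀ : (m : ℤ) / 2 = k := by lia
    simp [hfloor₀, hfloor₁, hfloor₂, hfloor₃, eval_chebyshevS_add_of_odd hm hk]

lemma reflection_commute {R : Type*} [CommRing R] [Module R V] {x y : V} {f g : Module.Dual R V}
    (hf : f x = 2) (hg : g y = 2) (hfy : f y = 0) (hgx : g x = 0) :
    Commute (Module.reflection hf) (Module.reflection hg) := by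
  ext z
  simp only [LinearEquiv.mul_apply, Module.reflection_apply, map_sub, map_smul, hfy, hgx,
    zero_smul, sub_zero]
  abel

lemma two_mul_eq_of_reflection_invariant {R : Type*} [CommRing R] [Module R V] {x : V}
    {f : Module.Dual R V} (hf : f x = 2) {Q : LinearMap.BilinForm R V}
    (hQ : ∀ y z, Q (Module.reflection hf y) (Module.reflection hf z) = Q y z) (y : V) :
    2 * Q y x = f y * Q x x := by
  have hyx : -Q y x + f y * Q x x = Q y x := by
    simpa [Module.reflection_apply, Module.reflection_apply_self] using hQ y x
  linear_combination -hyx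

lemma toDual_self_pos {K ι : Type*} [Field K] [LinearOrder K] [IsStrictOrderedRing K]
    [Module K V] [DecidableEq ι] (b : Module.Basis ι K V) {x : V} (hx : x ≠ 0) :
    0 < b.toDual x x := by
  have hsum : b.toDual x x = (b.repr x).sum fun _ c ↦ c * c := by
    nth_rw 2 [← b.linearCombination_repr x]
    simp [Finsupp.linearCombination_apply, Finsupp.sum, map_sum, b.toDual_apply_left]
  rw [hsum]
  exact Finset.sum_pos (fun i hi ↦ mul_self_pos.2 (Finsupp.mem_support_iff.1 hi))
    (Finsupp.support_nonempty_iff.2 (b.repr.map_ne_zero_iff.2 hx))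

lemma exists_invariant_posDef_form {K G : Type*} [Field K] [LinearOrder K] [IsStrictOrderedRing K]
    [Module K V] [Group G] [Finite G] (ρ : Representation K G V) :
    ∃ Q : LinearMap.BilinForm K V, (∀ x ≠ 0, 0 < Q x x) ∧
      ∀ g x y, Q (ρ g x) (ρ g y) = Q x y := by
  classical
  have := Fintype.ofFinite G
  let b := Module.Basis.ofVectorSpace K V
  refine ⟨∑ g, b.toDual.compl₁₂ (ρ g) (ρ g), fun x hx ↦ ?_, fun h x y ↦ ?_⟩
  · simp only [LinearMap.sum_apply, LinearMap.compl₁₂_apply]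
    refine Finset.sum_pos (fun g _ ↦ toDual_self_pos b fun hgx ↦ hx ?_) Finset.univ_nonempty
    simpa [← Module.End.mul_apply, ← map_mul] using congrArg (ρ g⁻¹) hgx
  · simp only [LinearMap.sum_apply, LinearMap.compl₁₂_apply, ← Module.End.mul_apply, ← map_mul]
    exact Fintype.sum_equiv (Equiv.mulRight h) _ _ fun _ ↦ rfl

end Reflections

section GeometricRepresentation

variable {B W : Type*} [Group W] {M : CoxeterMatrix B}

/-- The functional `2 B(·, α_i)` on the geometric representation, where `B` is the canonical form
`B(α_k, α_i) = -cos (π / M k i)` on the span of the simple roots `α_k = single k 1`. The entry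
`M k i = 0` encodes an infinite order, and then `π / 0 = 0` gives `B(α_k, α_i) = -1`, as it
should. -/
noncomputable def simpleCoroot (M : CoxeterMatrix B) (i : B) : Module.Dual ℝ (B →₀ ℝ) :=
  Finsupp.linearCombination ℝ fun k ↦ -2 * Real.cos (Real.pi / M k i)

lemma simpleCoroot_single (i j : B) :
    simpleCoroot M i (Finsupp.single j 1) = -2 * Real.cos (Real.pi / M j i) := by
  simp [simpleCoroot]

lemma simpleCoroot_single_self (i : B) : simpleCoroot M i (Finsupp.single i 1) = 2 := by
  simp [simpleCoroot_single]

variable (M) in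
/-- The reflection of the geometric representation attached to the `i`-th simple root. -/
noncomputable def simpleReflection (i : B) : (B →₀ ℝ) ≃ₗ[ℝ] (B →₀ ℝ) :=
  Module.reflection (simpleCoroot_single_self (M := M) i)

lemma isLiftable_simpleReflection : M.IsLiftable (simpleReflection M) := by
  intro i j
  have hinv : ∀ i, simpleReflection M i * simpleReflection M i = 1 := fun i ↦
    mul_eq_one_iff_eq_inv.2 (Module.reflection_inv _).symm
  obtain rfl | hij := eq_or_ne i j
  · rw [M.diagonal, pow_one, hinv]
  have h₁ : M i j ≠ 1 := M.off_diagonal i j hij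
  by_cases h₀ : M i j = 0
  · rw [h₀, pow_zero]
  by_cases h₂ : M i j = 2
  · have hcomm : Commute (simpleReflection M i) (simpleReflection M j) :=
      reflection_commute _ _ (by simp [simpleCoroot_single, M.symmetric j i, h₂])
        (by simp [simpleCoroot_single, h₂])
    rw [h₂, hcomm.mul_pow, sq, sq, hinv, hinv, one_mul]
  exact reflection_mul_reflection_pow_eq_one _ _ (by omega) (by
    rw [simpleCoroot_single, simpleCoroot_single, M.symmetric j i]
    ring)

/-- The geometric representation of a Coxeter group, in which each simple reflection acts as a
linear reflection of the span of the simple roots. -/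
noncomputable def geomRep (cs : CoxeterSystem M W) : Representation ℝ W (B →₀ ℝ) :=
  LinearEquiv.automorphismGroup.toLinearMapMonoidHom.comp
    (cs.lift ⟨simpleReflection M, isLiftable_simpleReflection⟩)

variable (cs : CoxeterSystem M W)

lemma geomRep_simple (i : B) :
    geomRep cs (cs.simple i) = Module.reflection (simpleCoroot_single_self (M := M) i) :=
  congrArg LinearEquiv.toLinearMap (cs.lift_apply_simple isLiftable_simpleReflection i)

lemma geomRep_apply_of_mem_closure {J : Set B} {i : B} (hi : i ∉ J) {w : W}
    (hw : w ∈ closure (cs.simple '' J)) (z : B →₀ ℝ) : geomRep cs w z i = z i := by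
  induction hw using closure_induction generalizing z with
  | mem x hx =>
    obtain ⟨j, hj, rfl⟩ := hx
    have hij : j ≠ i := fun h ↦ hi (h ▸ hj)
    simp [geomRep_simple, Module.reflection_apply, Finsupp.single_eq_of_ne' hij]
  | one => simp
  | mul x y _ _ hx hy => rw [map_mul, Module.End.mul_apply, hx, hy]
  | inv x _ hx =>
    rw [← hx, ← Module.End.mul_apply, ← map_mul, mul_inv_cancel, map_one, Module.End.one_apply]

lemma simple_mem_closure_iff {J : Set B} {i : B} :
    cs.simple i ∈ closure (cs.simple '' J) ↔ i ∈ J := by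
  refine ⟨fun hw ↦ ?_, fun hi ↦ Subgroup.subset_closure (Set.mem_image_of_mem _ hi)⟩
  by_contra hi
  have hfix := geomRep_apply_of_mem_closure cs hi hw (Finsupp.single i 1)
  simp [geomRep_simple] at hfix
  norm_num at hfix

lemma simple_injective : Function.Injective cs.simple := fun i j hij ↦ by
  simpa using (simple_mem_closure_iff cs (J := {j})).1
    (hij ▸ Subgroup.subset_closure (Set.mem_image_of_mem _ rfl))

lemma simple_notMem_closure_diff (J : Set B) (i : B) :
    cs.simple i ∉ closure (cs.simple '' J \ {cs.simple i}) := by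
  rw [← Set.image_singleton, ← Set.image_sdiff (simple_injective cs), simple_mem_closure_iff]
  exact fun h ↦ h.2 rfl

lemma exists_pos_mul_simpleCoroot [Finite W] (cs : CoxeterSystem M W) {v : B →₀ ℝ} (hv : v ≠ 0) :
    ∃ j ∈ v.support, 0 < v j * simpleCoroot M j v := by
  obtain ⟨Q, hpos, hinv⟩ := exists_invariant_posDef_form (geomRep cs)
  have hQroot : ∀ j, 2 * Q v (Finsupp.single j 1) =
      simpleCoroot M j v * Q (Finsupp.single j 1) (Finsupp.single j 1) := fun j ↦
    two_mul_eq_of_reflection_invariant (simpleCoroot_single_self j)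
      (fun y z ↦ by simpa [geomRep_simple] using hinv (cs.simple j) y z) v
  have hQv : 2 * Q v v = ∑ j ∈ v.support,
      v j * simpleCoroot M j v * Q (Finsupp.single j 1) (Finsupp.single j 1) := by
    nth_rw 2 [← Finsupp.sum_single v]
    rw [Finsupp.sum, map_sum, Finset.mul_sum]
    refine Finset.sum_congr rfl fun j _ ↦ ?_
    rw [mul_assoc, ← hQroot, ← Finsupp.smul_single_one, map_smul, smul_eq_mul]
    ring
  by_contra! hle
  refine (mul_pos two_pos (hpos v hv)).not_ge (hQv.le.trans (Finset.sum_nonpos fun j hj ↦ ?_))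
  exact mul_nonpos_of_nonpos_of_nonneg (hle j hj) (hpos _ (by simp)).le

lemma half_le_cos_pi_div {m : ℕ} (h₁ : m ≠ 1) (h₂ : m ≠ 2) :
    1 / 2 ≤ Real.cos (Real.pi / m) := by
  obtain rfl | h₀ := eq_or_ne m 0
  · norm_num
  have hm : (3 : ℝ) ≤ m := by exact_mod_cast (by omega : 3 ≤ m)
  rw [← Real.cos_pi_div_three]
  have := Real.pi_pos
  exact Real.cos_le_cos_of_nonneg_of_le_pi (by positivity) (by linarith) (by gcongr)

lemma cos_pi_div_nonneg {m : ℕ} (h₁ : m ≠ 1) : 0 ≤ Real.cos (Real.pi / m) := by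
  obtain rfl | h₂ := eq_or_ne m 2
  · simp
  · exact (by norm_num : (0 : ℝ) ≤ 1 / 2).trans (half_le_cos_pi_div h₁ h₂)

lemma exists_sum_cos_lt_one [DecidableEq B] [Finite W] (cs : CoxeterSystem M W) {J : Finset B}
    (hJ : J.Nonempty) :
    ∃ j ∈ J, ∑ i ∈ J.erase j, Real.cos (Real.pi / M i j) < 1 := by
  let v : B →₀ ℝ := ∑ i ∈ J, Finsupp.single i 1
  have hv_apply : ∀ j, v j = if j ∈ J then 1 else 0 := fun j ↦ by
    simp [v, Finsupp.finsetSum_apply, Finsupp.single_apply]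
  have hv : v ≠ 0 := by
    obtain ⟨j, hj⟩ := hJ
    exact fun h ↦ by simpa [hj, h] using hv_apply j
  obtain ⟨j, hjv, hpos⟩ := exists_pos_mul_simpleCoroot cs hv
  have hj : j ∈ J := by
    by_contra hj
    simp [hv_apply, hj] at hjv
  refine ⟨j, hj, ?_⟩
  have hcoroot : simpleCoroot M j v = 2 - 2 * ∑ i ∈ J.erase j, Real.cos (Real.pi / M i j) := by
    simp only [v, map_sum, simpleCoroot_single]
    rw [← Finset.add_sum_erase _ _ hj, ← Finset.mul_sum, M.diagonal]
    simp [sub_eq_add_neg]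
  rw [hv_apply, if_pos hj, hcoroot] at hpos
  linarith

lemma exists_diagram_leaf [Finite W] (cs : CoxeterSystem M W) {J : Finset B} (hJ : J.Nonempty) :
    ∃ r ∈ J, ∃ k, ∀ i ∈ J, i ≠ r → i ≠ k → M i r = 2 := by
  classical
  obtain ⟨r, hr, hsum⟩ := exists_sum_cos_lt_one cs hJ
  by_cases! hk : ∀ i ∈ J.erase r, M i r = 2
  · exact ⟨r, hr, r, fun i hi hir _ ↦ hk i (Finset.mem_erase.2 ⟨hir, hi⟩)⟩
  obtain ⟨k, hkJ, hk2⟩ := hk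
  refine ⟨r, hr, k, fun i hi hir hik ↦ ?_⟩
  by_contra hi2
  have hne : ∀ {i}, i ∈ J.erase r → M i r ≠ 1 := fun hi ↦
    M.off_diagonal _ _ (Finset.ne_of_mem_erase hi)
  have hiJ : i ∈ J.erase r := Finset.mem_erase.2 ⟨hir, hi⟩
  have hge := Finset.add_le_sum (f := fun i ↦ Real.cos (Real.pi / M i r))
    (fun i hi ↦ cos_pi_div_nonneg (hne hi)) hiJ hkJ hik
  linarith [half_le_cos_pi_div (hne hiJ) hi2, half_le_cos_pi_div (hne hkJ) hk2]

lemma commute_simple {i j : B} (hij : M i j = 2) : Commute (cs.simple i) (cs.simple j) := by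
  have hsq := cs.simple_mul_simple_pow i j
  rw [hij, pow_two, mul_eq_one_iff_eq_inv] at hsq
  exact hsq.trans (by simp)

end GeometricRepresentation

section CoxeterCircuits

variable {B W : Type*} [Group W] {M : CoxeterMatrix B} (cs : CoxeterSystem M W)

lemma exists_isCircuitOn_parabolic_pair [Finite W] (i j : B) :
    ∃ e, IsCircuitOn (cs.simple '' {i, j}) (closure (cs.simple '' {i, j})) e := by
  have hlift : M.IsLiftable fun _ ↦ (-1 : ℤˣ) := fun i j ↦ by simp
  rw [Set.image_pair]
  exact exists_isCircuitOn_closure_pair (Set.toFinite _) (cs.simple_mul_simple_self i)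
    (cs.simple_mul_simple_self j) (cs.lift ⟨_, hlift⟩) (cs.lift_apply_simple hlift i)
    (cs.lift_apply_simple hlift j)

lemma exists_isCircuitOn_parabolic_insert [Finite W] {J : Set B} {r k a : B} {φ : Perm W}
    (hφ : IsCircuitOn (cs.simple '' J) (closure (cs.simple '' J)) φ)
    (hleaf : ∀ i ∈ J, i ≠ k → M i r = 2) (ha : a ∈ J) (hak : a ≠ k) :
    ∃ e, IsCircuitOn (cs.simple '' insert r J) (closure (cs.simple '' insert r J)) e := by
  rw [Set.image_insert_eq]
  refine exists_isCircuitOn_closure_insert (k := cs.simple k) hφ ?_ ?_ ?_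
    (Set.mem_image_of_mem _ ha) (fun ha1 ↦ ?_) ((simple_injective cs).ne hak)
  · rintro _ ⟨i, hi, rfl⟩
    exact hφ.exists_eq_mul (Set.mem_image_of_mem _ hi) (simple_notMem_closure_diff cs J i)
  · rintro _ (rfl | ⟨i, -, rfl⟩) <;> exact cs.simple_mul_simple_self _
  · rintro _ ⟨i, hi, rfl⟩ hik
    exact commute_simple cs (hleaf i hi fun h ↦ hik (congrArg cs.simple h))
  · exact (simple_mem_closure_iff cs (J := ∅)).1 (ha1 ▸ one_mem _)

theorem exists_isCircuitOn_parabolic [Finite W] {J : Finset B} (hJ : J.Nonempty) :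
    ∃ e, IsCircuitOn (cs.simple '' J) (closure (cs.simple '' J)) e := by
  classical
  induction J using Finset.strongInduction with
  | H J ih =>
    obtain ⟨r, hr, k, hleaf⟩ := exists_diagram_leaf cs hJ
    by_cases! ha : ∃ a ∈ J, a ≠ r ∧ a ≠ k
    · obtain ⟨a, haJ, har, hak⟩ := ha
      have haJr : a ∈ J.erase r := Finset.mem_erase.2 ⟨har, haJ⟩
      obtain ⟨φ, hφ⟩ := ih _ (Finset.erase_ssubset hr) ⟨a, haJr⟩
      rw [← Finset.insert_erase hr, Finset.coe_insert]
      exact exists_isCircuitOn_parabolic_insert cs hφ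
        (fun i hi ↦ hleaf i (Finset.mem_of_mem_erase hi) (Finset.ne_of_mem_erase hi)) haJr hak
    · obtain ⟨j, hj⟩ : ∃ j, (J : Set B) = {r, j} := by
        by_cases hk : k ∈ J
        · exact ⟨k, by grind⟩
        · exact ⟨r, by grind⟩
      rw [hj]
      exact exists_isCircuitOn_parabolic_pair cs r j

end CoxeterCircuits

end CoxeterCircuit

/-- For every finite Coxeter system `(W, S)` over a nonempty finite index set `B`,
there exists a special Hamiltonian circuit map: a bijection `θ : ℤ/kℤ → W`
(`k = |W|`) whose consecutive ratios `θ(t+1)·θ(t)⁻¹` are simple reflections, and in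
which every simple reflection occurs as an edge label. -/
theorem exists_special_hamiltonianCircuitMap_of_finite_coxeterSystem
    {B W : Type*} [Fintype B] [Nonempty B] [Group W] [Finite W]
    (M : CoxeterMatrix B) (cs : CoxeterSystem M W) :
    ∃ θ : ZMod (Nat.card W) → W, Function.Bijective θ ∧
      (∀ t, θ (t + 1) * (θ t)⁻¹ ∈ Set.range cs.simple) ∧
      (∀ i : B, ∃ t, θ (t + 1) = cs.simple i * θ t) := by
  obtain ⟨e, he⟩ := CoxeterCircuit.exists_isCircuitOn_parabolic cs Finset.univ_nonempty
  have htop : (Subgroup.closure (cs.simple '' (Finset.univ : Finset B)) : Set W) = Set.univ := by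
    rw [Finset.coe_univ, Set.image_univ, cs.subgroup_closure_range_simple, Subgroup.coe_top]
  obtain ⟨θ, hθ, hθe⟩ := CoxeterCircuit.exists_zmod_enumeration (htop ▸ he.isCycleOn)
  refine ⟨θ, hθ, fun t ↦ ?_, fun i ↦ ?_⟩
  · obtain ⟨_, ⟨i, -, rfl⟩, hi⟩ := he.exists_label (θ t) (htop ▸ Set.mem_univ _)
    exact ⟨i, by rw [hθe, hi, mul_inv_cancel_right]⟩
  · obtain ⟨x, -, hx⟩ := he.exists_eq_mul (Set.mem_image_of_mem _ (Finset.mem_univ i))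
      (CoxeterCircuit.simple_notMem_closure_diff cs _ i)
    obtain ⟨t, rfl⟩ := hθ.surjective x
    exact ⟨t, by rw [hθe, hx]⟩
end

section
/- Let Γ be a simple graph on a vertex type V, let m, n be positive integers, and let θ₁ : ℤ/mℤ → V and θ₂ : ℤ/nℤ → V be injective maps with disjoint images such that Γ.Adj (θ₁ t) (θ₁ (t+1)) for all t ∈ ℤ/mℤ and Γ.Adj (θ₂ t) (θ₂ (t+1)) for all t ∈ ℤ/nℤ (so θ₁ and θ₂ trace vertex-disjoint cycles in Γ). Suppose there exist t₁ ∈ ℤ/mℤ and t₂ ∈ ℤ/nℤ with Γ.Adj (θ₁ t₁) (θ₂ t₂) and Γ.Adj (θ₁ (t₁+1)) (θ₂ (t₂+1)). Then there exists an injective map θ : ℤ/(m+n)ℤ → V whose image is the union of the images of θ₁ and θ₂ and such that Γ.Adj (θ t) (θ (t+1)) for all t ∈ ℤ/(m+n)ℤ; i.e. the two cycles can be joined into a single cycle through all their vertices. -/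
/-!
Remove the edge from `θ₁ t₁` to `θ₁ (t₁ + 1)` and the edge from `θ₂ t₂` to `θ₂ (t₂ + 1)`. What
remains is a path from `θ₁ (t₁ + 1)` to `θ₁ t₁` and a path from `θ₂ (t₂ + 1)` to `θ₂ t₂`. The first
path followed by the reverse of the second is closed up into a cycle by the two joining edges.
Every edge is traversed in one direction only, so the argument applies to any relation.
-/

open Function Set
open scoped SetRel

section

variable {V : Type*} {R : SetRel V V}

theorem range_relSeries_append (p q : RelSeries R) (hpq : p.last ~[R] q.head) :
    range (p.append q hpq) = range p ∪ range q := by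
  ext v
  simp only [mem_union, ← RelSeries.mem_def, ← RelSeries.mem_toList, RelSeries.toList_append,
    List.mem_append]

theorem injective_relSeries_append {p q : RelSeries R} (hpq : p.last ~[R] q.head)
    (hp : Injective p) (hq : Injective q) (hdisj : Disjoint (range p) (range q)) :
    Injective (p.append q hpq) :=
  (Fin.append_injective_iff.2 ⟨hp, hq, disjoint_range_iff.1 hdisj⟩).comp (Fin.cast_injective _)

theorem relSeries_rel_add_one (p : RelSeries R) (hclose : p.last ~[R] p.head)
    (i : Fin (p.length + 1)) : p i ~[R] p (i + 1) := by
  induction i using Fin.lastCases with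
  | last => rwa [Fin.last_add_one]
  | cast i => rw [Fin.coeSucc_eq_succ]; exact p.step i

theorem exists_zmod_cycle_of_relSeries {n : ℕ} (p : RelSeries R) (hn : p.length + 1 = n)
    (hp : Injective p) (hclose : p.last ~[R] p.head) :
    ∃ θ : ZMod n → V, Injective θ ∧ range θ = range p ∧ ∀ t, θ t ~[R] θ (t + 1) := by
  subst hn
  let e := (ZMod.finEquiv (p.length + 1)).symm
  refine ⟨p ∘ e, hp.comp e.injective, e.surjective.range_comp p, fun t ↦ ?_⟩
  simpa only [comp_apply, map_add, map_one] using relSeries_rel_add_one p hclose (e t)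

theorem exists_relSeries_of_zmod_cycle {n : ℕ} (hn : 0 < n) {θ : ZMod n → V}
    (hθ : Injective θ) (s : ZMod n) (hadj : ∀ t ≠ s, θ t ~[R] θ (t + 1)) :
    ∃ p : RelSeries R, p.length + 1 = n ∧ Injective p ∧ range p = range θ ∧
      p.head = θ (s + 1) ∧ p.last = θ s := by
  obtain ⟨k, rfl⟩ := Nat.exists_eq_add_one.2 hn
  let e : Fin (k + 1) ≃ ZMod (k + 1) :=
    (ZMod.finEquiv (k + 1)).toEquiv.trans (Equiv.addLeft (s + 1))
  have e_add_one (i : Fin (k + 1)) : e (i + 1) = e i + 1 := by simp [e, add_assoc]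
  have e_zero : e 0 = s + 1 := by simp [e]
  have e_last : e (Fin.last k) = s :=
    add_right_cancel (by rw [← e_add_one, Fin.last_add_one, e_zero])
  have step (i : Fin k) : θ (e i.castSucc) ~[R] θ (e i.succ) := by
    rw [← Fin.coeSucc_eq_succ, e_add_one]
    exact hadj _ (e_last ▸ e.injective.ne i.castSucc_ne_last)
  exact ⟨⟨k, θ ∘ e, step⟩, rfl, hθ.comp e.injective, e.surjective.range_comp θ,
    congrArg θ e_zero, congrArg θ e_last⟩

theorem simpleGraph_join_two_cycles_general {m n : ℕ} (hm : 0 < m) (hn : 0 < n)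
    {θ₁ : ZMod m → V} {θ₂ : ZMod n → V} (h₁inj : Injective θ₁) (h₂inj : Injective θ₂)
    (hdisj : Disjoint (range θ₁) (range θ₂)) (t₁ : ZMod m) (t₂ : ZMod n)
    (h₁adj : ∀ t ≠ t₁, θ₁ t ~[R] θ₁ (t + 1)) (h₂adj : ∀ t ≠ t₂, θ₂ (t + 1) ~[R] θ₂ t)
    (hj₁ : θ₁ t₁ ~[R] θ₂ t₂) (hj₂ : θ₂ (t₂ + 1) ~[R] θ₁ (t₁ + 1)) :
    ∃ θ : ZMod (m + n) → V, Injective θ ∧ range θ = range θ₁ ∪ range θ₂ ∧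
      ∀ t, θ t ~[R] θ (t + 1) := by
  obtain ⟨p, p_length, p_inj, p_range, p_head, p_last⟩ :=
    exists_relSeries_of_zmod_cycle hm h₁inj t₁ h₁adj
  obtain ⟨q, q_length, q_inj, q_range, q_head, q_last⟩ :=
    exists_relSeries_of_zmod_cycle (R := R.inv) hn h₂inj t₂ h₂adj
  let q' : RelSeries R := q.reverse
  have q'_inj : Injective q' := q_inj.comp Fin.rev_injective
  have q'_range : range q' = range θ₂ := (Fin.rev_surjective.range_comp q).trans q_range
  have q'_head : q'.head = θ₂ t₂ := q.head_reverse.trans q_last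
  have q'_last : q'.last = θ₂ (t₂ + 1) := q.last_reverse.trans q_head
  have join : p.last ~[R] q'.head := by rwa [p_last, q'_head]
  have close : (p.append q' join).last ~[R] (p.append q' join).head := by
    rwa [RelSeries.last_append, RelSeries.head_append, q'_last, p_head]
  have length : (p.append q' join).length + 1 = m + n := by
    rw [RelSeries.append_length, RelSeries.reverse_length]; lia
  rw [← p_range, ← q'_range] at hdisj ⊢
  rw [← range_relSeries_append p q' join]
  exact exists_zmod_cycle_of_relSeries _ length
    (injective_relSeries_append join p_inj q'_inj hdisj) close

end

/-- Joining two vertex-disjoint cycles of a simple graph into a single cycle: if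
`θ₁ : ℤ/mℤ → V` and `θ₂ : ℤ/nℤ → V` trace vertex-disjoint cycles in `Γ` and there
are `t₁, t₂` with `θ₁ t₁ ~ θ₂ t₂` and `θ₁ (t₁+1) ~ θ₂ (t₂+1)`, then there is a single
cycle `θ : ℤ/(m+n)ℤ → V` through exactly the vertices of the two cycles. -/
theorem simpleGraph_join_two_cycles
    {V : Type*} (Γ : SimpleGraph V) (m n : ℕ) (hm : 0 < m) (hn : 0 < n)
    (θ₁ : ZMod m → V) (θ₂ : ZMod n → V)
    (h₁inj : Function.Injective θ₁) (h₂inj : Function.Injective θ₂)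
    (hdisj : Disjoint (Set.range θ₁) (Set.range θ₂))
    (h₁adj : ∀ t, Γ.Adj (θ₁ t) (θ₁ (t + 1)))
    (h₂adj : ∀ t, Γ.Adj (θ₂ t) (θ₂ (t + 1)))
    (t₁ : ZMod m) (t₂ : ZMod n)
    (hj₁ : Γ.Adj (θ₁ t₁) (θ₂ t₂)) (hj₂ : Γ.Adj (θ₁ (t₁ + 1)) (θ₂ (t₂ + 1))) :
    ∃ θ : ZMod (m + n) → V, Function.Injective θ ∧
      Set.range θ = Set.range θ₁ ∪ Set.range θ₂ ∧
      ∀ t, Γ.Adj (θ t) (θ (t + 1)) := by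
  exact simpleGraph_join_two_cycles_general (R := {(u, v) | Γ.Adj u v}) hm hn h₁inj h₂inj hdisj
    t₁ t₂ (fun t _ ↦ h₁adj t) (fun t _ ↦ (h₂adj t).symm) hj₁ hj₂.symm
end
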